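/- Let w ∈ V with ⟨b,w⟩ < 0 and set p_w := (M(w)/⟨−b,w⟩)·(−b). Let q be the unique point of the frontier of P on the ray {λ·(−b) : λ > 0}. Then ‖q‖/‖q − b‖ ≤ ‖p_w‖/‖p_w − b‖. -/

import Mathlib

open RealInnerProductSpace

/-- Let `P` be a convex polytope in a finite-dimensional real inner product space whose
interior contains the origin, `b ∈ interior P` with `b ≠ 0`, and `M w = max_{x ∈ P} ⟪x, w⟫`.
Let `q` be the unique point of the frontier of `P` on the ray `{λ • (-b) : λ > 0}`.
If `⟪b, w⟫ < 0` and `p_w = (M w / ⟪-b, w⟫) • (-b)`, then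
`‖q‖ / ‖q - b‖ ≤ ‖p_w‖ / ‖p_w - b‖`. -/
theorem ratio_at_q_le_ratio_at_pw
    {V : Type*} [NormedAddCommGroup V] [InnerProductSpace ℝ V] [FiniteDimensional ℝ V]
    (S : Finset V) (P : Set V) (hP : P = convexHull ℝ (S : Set V))
    (h0 : (0 : V) ∈ interior P)
    (b : V) (hb : b ∈ interior P) (hb0 : b ≠ 0)
    (M : V → ℝ) (hM : ∀ w : V, IsGreatest ((fun x => ⟪x, w⟫) '' P) (M w))
    (q : V) (hq : q ∈ frontier P) (hqray : ∃ μ : ℝ, 0 < μ ∧ q = μ • (-b))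
    (w : V) (hbw : ⟪b, w⟫ < 0)
    (p : V) (hp : p = (M w / ⟪-b, w⟫) • (-b)) :
    ‖q‖ / ‖q - b‖ ≤ ‖p‖ / ‖p - b‖ := by
  obtain ⟨μ, hμ, rfl⟩ := hqray
  have hcl : IsClosed P := by
    rw [hP]
    exact (S.finite_toSet.isCompact_convexHull (𝕜 := ℝ)).isClosed
  have hqP : μ • (-b) ∈ P := hcl.frontier_subset hq
  have hle : ⟪μ • (-b), w⟫ ≤ M w := (hM w).2 ⟨_, hqP, rfl⟩
  have hpos : 0 < ⟪-b, w⟫ := by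
    rw [inner_neg_left]; linarith
  rw [real_inner_smul_left] at hle
  have hν : μ ≤ M w / ⟪-b, w⟫ := (le_div_iff₀ hpos).2 hle
  have key : ∀ t : ℝ, 0 < t → ‖t • (-b)‖ / ‖t • (-b) - b‖ = t / (t + 1) := by
    intro t ht
    have h1 : t • (-b) - b = (t + 1) • (-b) := by
      rw [add_smul, one_smul, sub_eq_add_neg]
    have hb' : ‖b‖ ≠ 0 := norm_ne_zero_iff.2 hb0
    rw [h1, norm_smul, norm_smul, norm_neg, Real.norm_of_nonneg ht.le,
      Real.norm_of_nonneg (by linarith : (0 : ℝ) ≤ t + 1), mul_div_mul_right _ _ hb']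
  have hν0 : 0 < M w / ⟪-b, w⟫ := lt_of_lt_of_le hμ hν
  rw [hp, key _ hμ, key _ hν0, div_le_div_iff₀ (by linarith) (by linarith)]
  linarith
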